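/- The group G presented by ⟨t₁, x₁, x₂, ξ | t₁² = 1, t₁ x₁ t₁⁻¹ = x₁⁻¹, t₁ x₂ t₁⁻¹ = x₂, [t₁, ξ] = 1, ξ x₁ ξ⁻¹ = x₁, ξ x₂ ξ⁻¹ = x₂⁻¹⟩ is isomorphic to the amalgamated free product L₁ *_L L₂, where L₁ = ⟨x₂, t₁, ξ⟩ ≅ ℤ/2ℤ × (ℤ ⋊ ℤ) (ℤ/2ℤ generated by t₁, and the Klein bottle group generated by x₂, ξ), L₂ = ⟨x₁, t₁, ξ⟩ ≅ ℤ × D∞, and L = ⟨t₁, ξ⟩ ≅ ℤ/2ℤ × ℤ. -/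

import Mathlib

namespace Stmt19

/-- A two-member family of groups indexed by `Bool`. -/
def Fam (L₁ L₂ : Type u) : Bool → Type u := fun b => cond b L₁ L₂

instance (L₁ L₂ : Type u) [Group L₁] [Group L₂] : ∀ b, Group (Fam L₁ L₂ b)
  | true => ‹Group L₁›
  | false => ‹Group L₂›

/-- Generators: `0 = t₁`, `1 = x₁`, `2 = x₂`, `3 = ξ`. -/
abbrev t₁ : FreeGroup (Fin 4) := FreeGroup.of 0
abbrev x₁ : FreeGroup (Fin 4) := FreeGroup.of 1
abbrev x₂ : FreeGroup (Fin 4) := FreeGroup.of 2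
abbrev ξ : FreeGroup (Fin 4) := FreeGroup.of 3

/-- Relators of `⟨t₁, x₁, x₂, ξ | t₁² = 1, t₁x₁t₁⁻¹ = x₁⁻¹, t₁x₂t₁⁻¹ = x₂, [t₁, ξ] = 1,
ξx₁ξ⁻¹ = x₁, ξx₂ξ⁻¹ = x₂⁻¹⟩`. -/
def rels : Set (FreeGroup (Fin 4)) :=
  {t₁ ^ 2, t₁ * x₁ * t₁⁻¹ * x₁, t₁ * x₂ * t₁⁻¹ * x₂⁻¹, t₁ * ξ * t₁⁻¹ * ξ⁻¹,
   ξ * x₁ * ξ⁻¹ * x₁⁻¹, ξ * x₂ * ξ⁻¹ * x₂}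

/-- The Klein bottle group `ℤ ⋊ ℤ` (generator acting by negation). -/
abbrev KleinBottle :=
  SemidirectProduct (Multiplicative ℤ) (Multiplicative ℤ)
    (zpowersHom (MulAut (Multiplicative ℤ)) (MulEquiv.inv (Multiplicative ℤ)))

/-- `L₁ = ℤ/2ℤ × (ℤ ⋊ ℤ)`. -/
abbrev L₁ := Multiplicative (ZMod 2) × KleinBottle
/-- `L₂ = ℤ × D∞`. -/
abbrev L₂ := Multiplicative ℤ × DihedralGroup 0
/-- `L = ℤ/2ℤ × ℤ`. -/
abbrev L := Multiplicative (ZMod 2) × Multiplicative ℤ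

section Lifts

variable {K : Type*} [Group K]

/-- The homomorphism out of `ℤ/2ℤ` determined by an element squaring to `1`. -/
def zmodTwoLift (t : K) (ht : t ^ 2 = 1) : Multiplicative (ZMod 2) →* K where
  toFun e := t ^ e.toAdd.val
  map_one' := by simp
  map_mul' a b := by
    rw [toAdd_mul, ZMod.val_add, ← pow_add, ← pow_eq_pow_mod _ ht]

theorem zmodTwo_hom_ext {f g : Multiplicative (ZMod 2) →* K}
    (h : f (.ofAdd 1) = g (.ofAdd 1)) : f = g := by
  ext a
  obtain ⟨a, rfl⟩ := Multiplicative.ofAdd.surjective a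
  fin_cases a
  · exact (map_one f).trans (map_one g).symm
  · exact h

@[simp]
theorem zmodTwoLift_ofAdd_one (t : K) (ht : t ^ 2 = 1) : zmodTwoLift t ht (.ofAdd 1) = t :=
  pow_one t

theorem conj_zpow_eq {t x : K} (h : t * x * t⁻¹ = x⁻¹) (i : ℤ) : t * x ^ i * t⁻¹ = x ^ (-i) := by
  rw [← conj_zpow, h, inv_zpow, zpow_neg]

theorem zpow_mul_eq {t x : K} (h : t * x * t⁻¹ = x⁻¹) (i : ℤ) : x ^ i * t = t * x ^ (-i) := by
  have := conj_zpow_eq h (-i)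
  rw [neg_neg, mul_inv_eq_iff_eq_mul] at this
  exact this.symm

/-- The homomorphism out of `D∞` determined by an involution inverting an element. -/
def infDihedralLift (x t : K) (ht : t ^ 2 = 1) (h : t * x * t⁻¹ = x⁻¹) : DihedralGroup 0 →* K :=
  MonoidHom.mk'
    (fun
      | .r i => x ^ (show ℤ from i)
      | .sr i => t * x ^ (show ℤ from i))
    (by
      rintro (i | i) (j | j)
      · exact zpow_add x i j
      · change t * x ^ ((show ℤ from j) - (show ℤ from i)) = x ^ (show ℤ from i) * (t * _)
        rw [← mul_assoc, zpow_mul_eq h, mul_assoc, ← zpow_add, neg_add_eq_sub]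
      · change t * x ^ ((show ℤ from i) + (show ℤ from j)) = t * _ * _
        rw [zpow_add, mul_assoc]
      · change x ^ ((show ℤ from j) - (show ℤ from i)) = t * x ^ (show ℤ from i) * (t * _)
        rw [mul_assoc, ← mul_assoc (x ^ _) t, zpow_mul_eq h, mul_assoc, ← zpow_add, ← mul_assoc,
          ← pow_two, ht, one_mul, neg_add_eq_sub])

theorem infDihedral_hom_ext {f g : DihedralGroup 0 →* K} (hr : f (.r 1) = g (.r 1))
    (hs : f (.sr 0) = g (.sr 0)) : f = g := by
  have key (i : ℤ) : f (.r i) = g (.r i) := by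
    have : DihedralGroup.r (n := 0) i = .r 1 ^ i := by
      rw [DihedralGroup.r_one_zpow]; rfl
    rw [this, map_zpow, map_zpow, hr]
  ext (i | i)
  · exact key i
  · have : DihedralGroup.sr (n := 0) i = .sr 0 * .r i := by simp
    rw [this, map_mul, map_mul, hs, key i]

theorem prod_hom_ext {M N : Type*} [Group M] [Group N] {f g : M × N →* K}
    (hl : f.comp (.inl M N) = g.comp (.inl M N)) (hr : f.comp (.inr M N) = g.comp (.inr M N)) :
    f = g := by
  ext ⟨m, n⟩
  rw [← Prod.fst_mul_snd (m, n), map_mul, map_mul]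
  exact congrArg₂ (· * ·) (DFunLike.congr_fun hl m) (DFunLike.congr_fun hr n)

theorem conj_zpow_zpowersHom {a s : K} (h : s * a * s⁻¹ = a⁻¹) (i : ℤ) (n : Multiplicative ℤ) :
    zpowersHom K a ((MulEquiv.inv (Multiplicative ℤ) ^ i : MulAut (Multiplicative ℤ)) n) =
      s ^ i * zpowersHom K a n * (s ^ i)⁻¹ := by
  have hs (n : Multiplicative ℤ) : zpowersHom K a n⁻¹ = s * zpowersHom K a n * s⁻¹ := by
    simp only [zpowersHom_apply, toAdd_inv, conj_zpow_eq h]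
  induction i generalizing n with
  | zero => simp
  | succ i ih =>
    rw [zpow_add_one, MulAut.mul_apply, ih, zpow_add_one, MulEquiv.inv_apply, hs]
    group
  | pred i ih =>
    have hn : (MulEquiv.inv (Multiplicative ℤ) : MulAut (Multiplicative ℤ))⁻¹ n = n⁻¹ := rfl
    have := hs n⁻¹
    rw [inv_inv] at this
    rw [zpow_sub_one, MulAut.mul_apply, ih, zpow_sub_one, hn, this]
    group

/-- The homomorphism out of the Klein bottle group determined by elements `a`, `s` with
`s a s⁻¹ = a⁻¹`. -/
def kleinBottleLift (a s : K) (h : s * a * s⁻¹ = a⁻¹) : KleinBottle →* K :=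
  SemidirectProduct.lift (zpowersHom K a) (zpowersHom K s) fun i =>
    MonoidHom.ext (conj_zpow_zpowersHom h i.toAdd)

@[simp]
theorem kleinBottleLift_inl (a s : K) (h : s * a * s⁻¹ = a⁻¹) (i : Multiplicative ℤ) :
    kleinBottleLift a s h (.inl i) = a ^ i.toAdd :=
  SemidirectProduct.lift_inl ..

@[simp]
theorem kleinBottleLift_inr (a s : K) (h : s * a * s⁻¹ = a⁻¹) (i : Multiplicative ℤ) :
    kleinBottleLift a s h (.inr i) = s ^ i.toAdd :=
  SemidirectProduct.lift_inr ..

theorem commute_kleinBottleLift {a s t : K} (h : s * a * s⁻¹ = a⁻¹) (ha : Commute t a)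
    (hs : Commute t s) (y : KleinBottle) : Commute t (kleinBottleLift a s h y) :=
  (ha.zpow_right _).mul_right (hs.zpow_right _)

theorem commute_infDihedralLift {x t s : K} (ht : t ^ 2 = 1) (h : t * x * t⁻¹ = x⁻¹)
    (hx : Commute s x) (hs : Commute s t) (y : DihedralGroup 0) :
    Commute s (infDihedralLift x t ht h y) := by
  rcases y with i | i
  · exact hx.zpow_right _
  · exact hs.mul_right (hx.zpow_right _)

/-- The homomorphism out of `L₁` determined by the images `t`, `a`, `s` of `t₁`, `x₂`, `ξ`. -/
def lift₁ (t a s : K) (ht : t ^ 2 = 1) (h : s * a * s⁻¹ = a⁻¹) (ha : Commute t a)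
    (hs : Commute t s) : L₁ →* K :=
  (zmodTwoLift t ht).noncommCoprod (kleinBottleLift a s h) fun _ y =>
    (commute_kleinBottleLift h ha hs y).pow_left _

/-- The homomorphism out of `L₂` determined by the images `t`, `x`, `s` of `t₁`, `x₁`, `ξ`. -/
def lift₂ (t x s : K) (ht : t ^ 2 = 1) (h : t * x * t⁻¹ = x⁻¹) (hx : Commute s x)
    (hs : Commute s t) : L₂ →* K :=
  (zpowersHom K s).noncommCoprod (infDihedralLift x t ht h) fun _ y =>
    (commute_infDihedralLift ht h hx hs y).zpow_left _

theorem lift₁_apply (t a s : K) (ht : t ^ 2 = 1) (h : s * a * s⁻¹ = a⁻¹) (ha : Commute t a)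
    (hs : Commute t s) (y : L₁) :
    lift₁ t a s ht h ha hs y = zmodTwoLift t ht y.1 * kleinBottleLift a s h y.2 := rfl

theorem lift₂_apply (t x s : K) (ht : t ^ 2 = 1) (h : t * x * t⁻¹ = x⁻¹) (hx : Commute s x)
    (hs : Commute s t) (y : L₂) :
    lift₂ t x s ht h hx hs y = s ^ y.1.toAdd * infDihedralLift x t ht h y.2 := rfl

theorem L₁_hom_ext {f g : L₁ →* K} (ht : f (.ofAdd 1, 1) = g (.ofAdd 1, 1))
    (ha : f (1, .inl (.ofAdd 1)) = g (1, .inl (.ofAdd 1)))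
    (hs : f (1, .inr (.ofAdd 1)) = g (1, .inr (.ofAdd 1))) : f = g :=
  prod_hom_ext (zmodTwo_hom_ext ht)
    (SemidirectProduct.hom_ext (MonoidHom.ext_mint ha) (MonoidHom.ext_mint hs))

theorem L₂_hom_ext {f g : L₂ →* K} (ht : f (1, .sr 0) = g (1, .sr 0))
    (hx : f (1, .r 1) = g (1, .r 1)) (hs : f (.ofAdd 1, 1) = g (.ofAdd 1, 1)) : f = g :=
  prod_hom_ext (MonoidHom.ext_mint hs) (infDihedral_hom_ext hx ht)

theorem L_hom_ext {f g : L →* K} (ht : f (.ofAdd 1, 1) = g (.ofAdd 1, 1))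
    (hs : f (1, .ofAdd 1) = g (1, .ofAdd 1)) : f = g :=
  prod_hom_ext (zmodTwo_hom_ext ht) (MonoidHom.ext_mint hs)

end Lifts

/-- The embedding of `⟨t₁, ξ⟩` in `L₁`. -/
def incl₁ : L →* L₁ := (MonoidHom.id _).prodMap SemidirectProduct.inr

/-- The embedding of `⟨t₁, ξ⟩` in `L₂`. -/
def incl₂ : L →* L₂ :=
  ((MonoidHom.id _).prodMap (zmodTwoLift (.sr 0) rfl)).comp MulEquiv.prodComm.toMonoidHom

theorem incl₁_injective : Function.Injective incl₁ :=
  Function.injective_id.prodMap SemidirectProduct.inr_injective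

theorem incl₂_injective : Function.Injective incl₂ := by
  have h : Function.Injective (zmodTwoLift (.sr 0 : DihedralGroup 0) rfl) :=
    (injective_iff_map_eq_one _).2 fun a ha => by
      obtain ⟨a, rfl⟩ := Multiplicative.ofAdd.surjective a
      fin_cases a
      · rfl
      · exact absurd ((zmodTwoLift_ofAdd_one _ _).symm.trans ha) (by rintro ⟨⟩)
  exact (Function.injective_id.prodMap h).comp MulEquiv.prodComm.injective

/-- The two embeddings of `L` as a family indexed by `Bool`. -/
def incl : ∀ b, L →* Fam L₁ L₂ b
  | true => incl₁
  | false => incl₂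

/-- The amalgamated free product of `L₁` and `L₂` over `L`. -/
abbrev Amalgam := Monoid.PushoutI incl

/-- The canonical map `L₁ → L₁ *_L L₂`. -/
def of₁ : L₁ →* Amalgam := Monoid.PushoutI.of (φ := incl) true

/-- The canonical map `L₂ → L₁ *_L L₂`. -/
def of₂ : L₂ →* Amalgam := Monoid.PushoutI.of (φ := incl) false

theorem of₁_incl₁ (y : L) : of₁ (incl₁ y) = of₂ (incl₂ y) :=
  (Monoid.PushoutI.of_apply_eq_base incl true y).trans
    (Monoid.PushoutI.of_apply_eq_base incl false y).symm

theorem of₁_t : of₁ (.ofAdd 1, 1) = of₂ (1, .sr 0) := of₁_incl₁ (.ofAdd 1, 1)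

theorem of₁_ξ : of₁ (1, .inr (.ofAdd 1)) = of₂ (.ofAdd 1, 1) := of₁_incl₁ (1, .ofAdd 1)

section Amalgam

variable {K : Type*} [Group K]

/-- The homomorphism out of `L₁ *_L L₂` given by a compatible pair of homomorphisms. -/
def amalgamLift (f₁ : L₁ →* K) (f₂ : L₂ →* K) (h : f₁.comp incl₁ = f₂.comp incl₂) :
    Amalgam →* K :=
  Monoid.PushoutI.lift (fun | true => f₁ | false => f₂) (f₁.comp incl₁)
    (fun | true => rfl | false => h.symm)

theorem amalgamLift_of₁ (f₁ : L₁ →* K) (f₂ : L₂ →* K) (h : f₁.comp incl₁ = f₂.comp incl₂)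
    (y : L₁) : amalgamLift f₁ f₂ h (of₁ y) = f₁ y :=
  Monoid.PushoutI.lift_of (φ := incl) (i := true) ..

theorem amalgamLift_of₂ (f₁ : L₁ →* K) (f₂ : L₂ →* K) (h : f₁.comp incl₁ = f₂.comp incl₂)
    (y : L₂) : amalgamLift f₁ f₂ h (of₂ y) = f₂ y :=
  Monoid.PushoutI.lift_of (φ := incl) (i := false) ..

theorem amalgam_hom_ext {f g : Amalgam →* K} (h₁ : f.comp of₁ = g.comp of₁)
    (h₂ : f.comp of₂ = g.comp of₂) : f = g :=
  Monoid.PushoutI.hom_ext_nonempty fun | true => h₁ | false => h₂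

end Amalgam

/-- The images of the generators in the amalgam. -/
def genImage : Fin 4 → Amalgam :=
  ![of₁ (.ofAdd 1, 1), of₂ (1, .r 1), of₁ (1, .inl (.ofAdd 1)), of₁ (1, .inr (.ofAdd 1))]

theorem lift_genImage_eq_one : ∀ r ∈ rels, FreeGroup.lift genImage r = 1 := by
  rintro r (rfl | rfl | rfl | rfl | rfl | rfl) <;>
    simp only [map_mul, map_pow, map_inv, FreeGroup.lift_apply_of, genImage, Matrix.cons_val]
  · rw [← map_pow, ← map_one of₁]; rfl
  · rw [of₁_t, ← map_inv, ← map_mul, ← map_mul, ← map_mul, ← map_one of₂]; rfl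
  · rw [← map_inv, ← map_inv, ← map_mul, ← map_mul, ← map_mul, ← map_one of₁]; rfl
  · rw [← map_inv, ← map_inv, ← map_mul, ← map_mul, ← map_mul, ← map_one of₁]; rfl
  · rw [of₁_ξ, ← map_inv, ← map_inv, ← map_mul, ← map_mul, ← map_mul, ← map_one of₂]; rfl
  · rw [← map_inv, ← map_mul, ← map_mul, ← map_mul, ← map_one of₁]; rfl

/-- The homomorphism from the presented group to the amalgam. -/
def toAmalgam : PresentedGroup rels →* Amalgam := PresentedGroup.toGroup lift_genImage_eq_one

namespace Presented

/-- The classes of the generators in the presented group. -/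
abbrev gen (i : Fin 4) : PresentedGroup rels := PresentedGroup.of i

theorem t_sq : gen 0 ^ 2 = 1 :=
  PresentedGroup.one_of_mem (x := t₁ ^ 2) (by simp [rels])

theorem t_conj_x₁ : gen 0 * gen 1 * (gen 0)⁻¹ = (gen 1)⁻¹ :=
  eq_inv_of_mul_eq_one_left <|
    PresentedGroup.one_of_mem (x := t₁ * x₁ * t₁⁻¹ * x₁) (by simp [rels])

theorem t_comm_x₂ : Commute (gen 0) (gen 2) :=
  mul_inv_eq_iff_eq_mul.1 <| mul_inv_eq_one.1 <|
    PresentedGroup.one_of_mem (x := t₁ * x₂ * t₁⁻¹ * x₂⁻¹) (by simp [rels])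

theorem t_comm_ξ : Commute (gen 0) (gen 3) :=
  mul_inv_eq_iff_eq_mul.1 <| mul_inv_eq_one.1 <|
    PresentedGroup.one_of_mem (x := t₁ * ξ * t₁⁻¹ * ξ⁻¹) (by simp [rels])

theorem ξ_comm_x₁ : Commute (gen 3) (gen 1) :=
  mul_inv_eq_iff_eq_mul.1 <| mul_inv_eq_one.1 <|
    PresentedGroup.one_of_mem (x := ξ * x₁ * ξ⁻¹ * x₁⁻¹) (by simp [rels])

theorem ξ_conj_x₂ : gen 3 * gen 2 * (gen 3)⁻¹ = (gen 2)⁻¹ :=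
  eq_inv_of_mul_eq_one_left <|
    PresentedGroup.one_of_mem (x := ξ * x₂ * ξ⁻¹ * x₂) (by simp [rels])

/-- The homomorphism from `L₁` to the presented group. -/
def from₁ : L₁ →* PresentedGroup rels :=
  lift₁ (gen 0) (gen 2) (gen 3) t_sq ξ_conj_x₂ t_comm_x₂ t_comm_ξ

/-- The homomorphism from `L₂` to the presented group. -/
def from₂ : L₂ →* PresentedGroup rels :=
  lift₂ (gen 0) (gen 1) (gen 3) t_sq t_conj_x₁ ξ_comm_x₁ t_comm_ξ.symm

theorem from₁_t : from₁ (.ofAdd 1, 1) = gen 0 := by simp [from₁, lift₁_apply]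

theorem from₁_x₂ : from₁ (1, .inl (.ofAdd 1)) = gen 2 := by simp [from₁, lift₁_apply]

theorem from₁_ξ : from₁ (1, .inr (.ofAdd 1)) = gen 3 := by simp [from₁, lift₁_apply]

theorem from₂_t : from₂ (1, .sr 0) = gen 0 := by
  change gen 3 ^ (0 : ℤ) * (gen 0 * gen 1 ^ (0 : ℤ)) = gen 0
  simp

theorem from₂_x₁ : from₂ (1, .r 1) = gen 1 := by
  change gen 3 ^ (0 : ℤ) * gen 1 ^ (1 : ℤ) = gen 1
  simp

theorem from₂_ξ : from₂ (.ofAdd 1, 1) = gen 3 := by simp [from₂, lift₂_apply]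

theorem from₁_comp_incl₁ : from₁.comp incl₁ = from₂.comp incl₂ :=
  L_hom_ext (from₁_t.trans from₂_t.symm) (from₁_ξ.trans from₂_ξ.symm)

/-- The homomorphism from the amalgam to the presented group. -/
def ofAmalgam : Amalgam →* PresentedGroup rels := amalgamLift from₁ from₂ from₁_comp_incl₁

theorem ofAmalgam_of₁ (y : L₁) : ofAmalgam (of₁ y) = from₁ y := amalgamLift_of₁ ..

theorem ofAmalgam_of₂ (y : L₂) : ofAmalgam (of₂ y) = from₂ y := amalgamLift_of₂ ..

theorem toAmalgam_gen (i : Fin 4) : toAmalgam (gen i) = genImage i :=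
  PresentedGroup.toGroup.of lift_genImage_eq_one

theorem ofAmalgam_comp_toAmalgam : ofAmalgam.comp toAmalgam = .id _ := by
  refine PresentedGroup.ext fun i => (congrArg ofAmalgam (toAmalgam_gen i)).trans ?_
  fin_cases i
  · exact (ofAmalgam_of₁ _).trans from₁_t
  · exact (ofAmalgam_of₂ _).trans from₂_x₁
  · exact (ofAmalgam_of₁ _).trans from₁_x₂
  · exact (ofAmalgam_of₁ _).trans from₁_ξ

theorem toAmalgam_comp_ofAmalgam : toAmalgam.comp ofAmalgam = .id _ := by
  refine amalgam_hom_ext (L₁_hom_ext ?_ ?_ ?_) (L₂_hom_ext ?_ ?_ ?_) <;>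
    simp only [MonoidHom.comp_apply, MonoidHom.id_apply, ofAmalgam_of₁, ofAmalgam_of₂, from₁_t,
      from₁_x₂, from₁_ξ, from₂_t, from₂_x₁, from₂_ξ, toAmalgam_gen]
  · rfl
  · rfl
  · rfl
  · exact of₁_t
  · rfl
  · exact of₁_ξ

end Presented

/-- the presented group is the amalgamated free product `L₁ *_L L₂` with
`L₁ ≅ ℤ/2ℤ × (ℤ ⋊ ℤ)`, `L₂ ≅ ℤ × D∞` and `L ≅ ℤ/2ℤ × ℤ` embedded in both factors. -/
theorem presented_iso_amalgam :
    ∃ j : ∀ b, L →* Fam L₁ L₂ b,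
      (∀ b, Function.Injective (j b)) ∧
      Nonempty (PresentedGroup rels ≃* Monoid.PushoutI j) :=
  ⟨incl, fun | true => incl₁_injective | false => incl₂_injective,
    ⟨MonoidHom.toMulEquiv toAmalgam Presented.ofAmalgam Presented.ofAmalgam_comp_toAmalgam
      Presented.toAmalgam_comp_ofAmalgam⟩⟩

end Stmt19
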